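/- Let n ≥ 4 be an even integer and let G : F_{2^n} → F_{2^n} be given by G(x) = x^{2^n−2} + x. Then there exists c ∈ F_{2^n} with c ≠ 1 such that the c-differential uniformity of G satisfies δ_{G,c} = 5. -/

import Mathlib

open Finset

/-- The `(c,a,b)` entry of the `c`-Difference Distribution Table of `G`:
the number of `x` with `G (x + a) - c * G x = b`. -/
def cddt {F : Type*} [Field F] [Fintype F] [DecidableEq F]
    (G : F → F) (c a b : F) : ℕ :=
  (Finset.univ.filter fun x : F => G (x + a) - c * G x = b).card

/-- The `c`-differential uniformity of `G`: the maximum entry of the `c`-DDT,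
where `a ≠ 0` is required only when `c = 1`. -/
def cdu {F : Type*} [Field F] [Fintype F] [DecidableEq F]
    (G : F → F) (c : F) : ℕ :=
  ((Finset.univ : Finset (F × F)).filter fun p => c = 1 → p.1 ≠ 0).sup
    fun p => cddt G c p.1 p.2

/-!
Write `G x = x⁻¹ + x`. Clearing denominators turns `G (x + a) - c * G x = b` into an equation of
degree three when `c ≠ 1`; clearing is only illegitimate at `x = 0` and `x = -a`, so every entry of
the table is at most `3 + 2`.

In characteristic two, `G x = (x + 1) ^ 2 / x`, even at `x = 0` because `0⁻¹ = 0`. Hence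
`G 0 = G 1 = 0`, and `G (x + 1) = c * G x` holds at `x = 0`, at `x = 1`, and whenever
`x ^ 3 = c * (x + 1) ^ 3`. When `F` contains the cube roots of unity and `c = u ^ 3`, the last
equation says that `x / (x + 1) = u / v` with `v ^ 3 = 1`, that is, `x = u / (u + v)`; for `u ≠ 0`
and `c ≠ 1` this gives three further solutions.
-/

theorem pow_card_sub_two_eq_inv {K : Type*} [GroupWithZero K] [Fintype K]
    (hK : 2 < Fintype.card K) (x : K) : x ^ (Fintype.card K - 2) = x⁻¹ := by
  rcases eq_or_ne x 0 with rfl | hx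
  · rw [inv_zero, zero_pow (by omega)]
  · refine eq_inv_of_mul_eq_one_left ?_
    rw [← pow_succ, show Fintype.card K - 2 + 1 = Fintype.card K - 1 by omega,
      FiniteField.pow_card_sub_one_eq_one x hx]

section FiniteField

variable {F : Type*} [Field F] [Fintype F]

theorem exists_isPrimitiveRoot_of_dvd_card_sub_one {k : ℕ} (hk : k ∣ Fintype.card F - 1) :
    ∃ ζ : F, IsPrimitiveRoot ζ k := by
  obtain ⟨g, hg⟩ := IsCyclic.exists_ofOrder_eq_natCard (α := Fˣ)
  obtain ⟨m, hm⟩ := hk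
  have hcard : orderOf g = m * k := by
    rw [hg, Nat.card_units, Nat.card_eq_fintype_card, hm, mul_comm]
  exact ⟨↑(g ^ m), IsPrimitiveRoot.coe_units_iff.mpr
    ((IsPrimitiveRoot.orderOf g).pow (orderOf_pos g) hcard)⟩

theorem exists_ne_zero_pow_ne_one {k : ℕ} (hk : 0 < k) (hF : k + 1 < Fintype.card F) :
    ∃ u : F, u ≠ 0 ∧ u ^ k ≠ 1 := by
  classical
  have hcard : #(insert 0 (Polynomial.nthRootsFinset k (1 : F))) < Fintype.card F :=
    calc #(insert 0 (Polynomial.nthRootsFinset k (1 : F)))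
      _ ≤ #(Polynomial.nthRootsFinset k (1 : F)) + 1 := card_insert_le _ _
      _ ≤ k + 1 := by
        gcongr
        rw [Polynomial.nthRootsFinset_def]
        exact (Multiset.toFinset_card_le _).trans (Polynomial.card_nthRoots k 1)
      _ < Fintype.card F := hF
  obtain ⟨u, hu⟩ := exists_mem_notMem_of_card_lt_card (card_univ (α := F) ▸ hcard)
  exact ⟨u, by simpa [Polynomial.mem_nthRootsFinset hk] using hu⟩

end FiniteField

theorem cdu_le_iff {F : Type*} [Field F] [Fintype F] [DecidableEq F]
    {G : F → F} {c : F} {m : ℕ} :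
    cdu G c ≤ m ↔ ∀ a b : F, (c = 1 → a ≠ 0) → cddt G c a b ≤ m := by
  simp only [cdu, Finset.sup_le_iff, mem_filter_univ, Prod.forall]

section UpperBound

variable {F : Type*} [Field F]

/-- The cubic obtained by clearing denominators in
`((x + a)⁻¹ + (x + a)) - c * (x⁻¹ + x) = b`; apart from `0` and `-a`, the solutions of this
equation are roots of it. -/
def cddtCubic (c a b : F) : Cubic F :=
  ⟨1 - c, (2 - c) * a - b, 1 - c + a ^ 2 - a * b, -c * a⟩

theorem mem_roots_cddtCubic {c a b x : F} (hc : c ≠ 1) (hx : x ≠ 0) (hxa : x + a ≠ 0)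
    (h : (x + a)⁻¹ + (x + a) - c * (x⁻¹ + x) = b) : x ∈ (cddtCubic c a b).roots := by
  have hlead : 1 - c ≠ 0 := sub_ne_zero.mpr hc.symm
  rw [Cubic.mem_roots_iff (Cubic.ne_zero_of_a_ne_zero hlead)]
  simp only [cddtCubic]
  field_simp at h
  linear_combination h

theorem cddt_inv_add_self_le_five [Fintype F] [DecidableEq F] {c : F} (hc : c ≠ 1) (a b : F) :
    cddt (fun x => x⁻¹ + x) c a b ≤ 5 := by
  have hsub : ({x | (x + a)⁻¹ + (x + a) - c * (x⁻¹ + x) = b} : Finset F) ⊆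
      {0, -a} ∪ (cddtCubic c a b).roots.toFinset := by
    intro x hx
    rw [mem_filter_univ] at hx
    simp only [mem_union, mem_insert, mem_singleton, Multiset.mem_toFinset]
    by_cases hpole : x = 0 ∨ x = -a
    · exact .inl hpole
    · obtain ⟨hx0, hxa⟩ := not_or.mp hpole
      exact .inr (mem_roots_cddtCubic hc hx0 (mt eq_neg_of_add_eq_zero_left hxa) hx)
  calc cddt (fun x => x⁻¹ + x) c a b
    _ ≤ #({0, -a} ∪ (cddtCubic c a b).roots.toFinset) := card_le_card hsub
    _ ≤ #{0, -a} + #(cddtCubic c a b).roots.toFinset := card_union_le _ _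
    _ ≤ 2 + 3 := add_le_add card_le_two Cubic.card_roots_le

end UpperBound

section CharTwo

variable {F : Type*} [Field F] [CharP F 2]

theorem inv_add_self_eq_add_one_sq_div (x : F) : x⁻¹ + x = (x + 1) ^ 2 / x := by
  rcases eq_or_ne x 0 with rfl | hx
  · simp
  · rw [CharTwo.add_sq]
    field_simp
    ring

theorem inv_add_self_add_one_eq_mul_iff {c x : F} :
    (x + 1)⁻¹ + (x + 1) = c * (x⁻¹ + x) ↔ x = 0 ∨ x = 1 ∨ x ^ 3 = c * (x + 1) ^ 3 := by
  rw [inv_add_self_eq_add_one_sq_div, inv_add_self_eq_add_one_sq_div, CharTwo.add_cancel_right]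
  rcases eq_or_ne x 0 with rfl | hx0
  · simp
  rcases eq_or_ne x 1 with rfl | hx1
  · simp [CharTwo.add_self_eq_zero]
  have hx : x + 1 ≠ 0 := mt CharTwo.add_eq_zero.mp hx1
  simp only [hx0, hx1, false_or]
  rw [← mul_div_assoc, div_eq_div_iff hx hx0, ← pow_succ, mul_assoc, ← pow_succ]

theorem div_add_pow_eq_mul_of_pow_eq_one {u v : F} {k : ℕ} (hv : v ^ k = 1) (huv : u + v ≠ 0) :
    (u / (u + v)) ^ k = u ^ k * (u / (u + v) + 1) ^ k := by
  have hadd : u / (u + v) + 1 = v / (u + v) := by rw [div_add_one huv, CharTwo.add_cancel_left]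
  rw [hadd, div_pow, div_pow, hv, mul_one_div]

theorem two_add_card_nthRootsFinset_le_cddt [Fintype F] [DecidableEq F] {u : F} (hu0 : u ≠ 0)
    (hu : u ^ 3 ≠ 1) :
    2 + #(Polynomial.nthRootsFinset 3 (1 : F)) ≤ cddt (fun x => x⁻¹ + x) (u ^ 3) 1 0 := by
  set V := Polynomial.nthRootsFinset 3 (1 : F)
  have hV {v : F} : v ∈ V ↔ v ^ 3 = 1 := Polynomial.mem_nthRootsFinset three_pos 1
  have huv {v : F} (hv : v ∈ V) : u + v ≠ 0 := by
    rw [Ne, CharTwo.add_eq_zero]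
    rintro rfl
    exact hu (hV.mp hv)
  have hinj : Function.Injective fun v => u / (u + v) := fun v v' h => by
    simpa [div_eq_mul_inv, hu0] using h
  have hdisj : Disjoint {0, 1} (V.image fun v => u / (u + v)) := by
    simp only [disjoint_insert_left, disjoint_singleton_left, mem_image, not_exists, not_and]
    refine ⟨fun v hv => div_ne_zero hu0 (huv hv), fun v hv h => ?_⟩
    have hv0 : v = 0 := by simpa [div_eq_one_iff_eq (huv hv)] using h
    simp [hv0, hV] at hv
  have hsub : {0, 1} ∪ V.image (fun v => u / (u + v)) ⊆
      ({x | (x + 1)⁻¹ + (x + 1) - u ^ 3 * (x⁻¹ + x) = 0} : Finset F) := by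
    intro x hx
    rw [mem_filter_univ, sub_eq_zero, inv_add_self_add_one_eq_mul_iff]
    simp only [mem_union, mem_insert, mem_singleton, mem_image, or_assoc] at hx
    refine hx.imp_right (Or.imp_right ?_)
    rintro ⟨v, hv, rfl⟩
    exact div_add_pow_eq_mul_of_pow_eq_one (hV.mp hv) (huv hv)
  calc 2 + #V
    _ = #({0, 1} ∪ V.image fun v => u / (u + v)) := by
      rw [card_union_of_disjoint hdisj, card_pair zero_ne_one, card_image_of_injective _ hinj]
    _ ≤ cddt (fun x => x⁻¹ + x) (u ^ 3) 1 0 := card_le_card hsub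

end CharTwo

theorem cdu_inv_add_self_eq_five {F : Type*} [Field F] [CharP F 2] [Fintype F] [DecidableEq F]
    {u ζ : F} (hζ : IsPrimitiveRoot ζ 3) (hu0 : u ≠ 0) (hu : u ^ 3 ≠ 1) :
    cdu (fun x => x⁻¹ + x) (u ^ 3) = 5 := by
  refine le_antisymm (cdu_le_iff.mpr fun a b _ => cddt_inv_add_self_le_five hu a b) ?_
  calc 5
    _ = 2 + #(Polynomial.nthRootsFinset 3 (1 : F)) := by rw [hζ.card_nthRootsFinset]
    _ ≤ cddt (fun x => x⁻¹ + x) (u ^ 3) 1 0 := two_add_card_nthRootsFinset_le_cddt hu0 hu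
    _ ≤ cdu (fun x => x⁻¹ + x) (u ^ 3) := cdu_le_iff.mp le_rfl 1 0 fun _ => one_ne_zero

theorem exists_c_cdu_eq_five_even
    {F : Type*} [Field F] [Fintype F] [DecidableEq F]
    (n : ℕ) (hn : 4 ≤ n) (hneven : Even n)
    (hF : Fintype.card F = 2 ^ n)
    (G : F → F) (hG : ∀ x : F, G x = x ^ (2 ^ n - 2) + x) :
    ∃ c : F, c ≠ 1 ∧ cdu G c = 5 := by
  have : CharP F 2 := charP_of_card_eq_prime_pow hF
  have hcard : 2 ^ 4 ≤ Fintype.card F := hF ▸ Nat.pow_le_pow_right two_pos hn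
  have hGinv : G = fun x => x⁻¹ + x := funext fun x => by
    rw [hG, ← hF, pow_card_sub_two_eq_inv (by omega)]
  have hthree : 3 ∣ Fintype.card F - 1 := by
    simpa [hF] using Nat.pow_sub_one_dvd_pow_sub_one 2 hneven.two_dvd
  obtain ⟨ζ, hζ⟩ := exists_isPrimitiveRoot_of_dvd_card_sub_one hthree
  obtain ⟨u, hu0, hu⟩ := exists_ne_zero_pow_ne_one (F := F) three_pos (by omega)
  exact ⟨u ^ 3, hu, hGinv ▸ cdu_inv_add_self_eq_five hζ hu0 hu⟩
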